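/- (The Bessel inequality, eq. (bessel-ineq), in integral form.) For every real z > 0, one has (∫_{−1}^{1} e^{zt}·(1 − t²)^{−1/2} dt)² > (z² + 4) · (∫_{−1}^{1} e^{zt}·√(1 − t²) dt)², i.e. B₀(z)² > (z² + 4)·B₁(z)². Via the Poisson representations I₀(z) = B₀(z)/π and I₁(z) = z·B₁(z)/π, this is exactly the inequality (I₀(z)/I₁(z))² > 1 + 4/z² for all z > 0. -/

import Mathlib

open intervalIntegral

/-- `B₀(z) = ∫_{−1}^{1} e^{zt} (1 − t²)^{−1/2} dt`, so that `I₀(z) = B₀(z)/π`. -/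
noncomputable def B0 (z : ℝ) : ℝ :=
  ∫ t in (-1 : ℝ)..1, Real.exp (z * t) * (1 - t ^ 2) ^ (-(1 / 2) : ℝ)

/-- `B₁(z) = ∫_{−1}^{1} e^{zt} √(1 − t²) dt`, so that `I₁(z) = z·B₁(z)/π`. -/
noncomputable def B1 (z : ℝ) : ℝ :=
  ∫ t in (-1 : ℝ)..1, Real.exp (z * t) * Real.sqrt (1 - t ^ 2)

/-- Trigonometric form of the weighted integrals. -/
noncomputable def KK (w : ℝ → ℝ) (z : ℝ) : ℝ :=
  ∫ θ in (0 : ℝ)..Real.pi, Real.exp (z * Real.cos θ) * w θ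

theorem KK_intble (w : ℝ → ℝ) (hw : Continuous w) (z : ℝ) :
    IntervalIntegrable (fun θ => Real.exp (z * Real.cos θ) * w θ) MeasureTheory.volume 0 Real.pi := by
  apply Continuous.intervalIntegrable
  fun_prop

theorem KK_lin (u v : ℝ → ℝ) (hu : Continuous u) (hv : Continuous v) (a b z : ℝ) :
    KK (fun θ => a * u θ + b * v θ) z = a * KK u z + b * KK v z := by
  unfold KK
  rw [← intervalIntegral.integral_const_mul, ← intervalIntegral.integral_const_mul,
    ← intervalIntegral.integral_add ((KK_intble u hu z).const_mul a)
      ((KK_intble v hv z).const_mul b)]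
  congr 1
  ext θ
  ring

theorem KK_ibp (u u' : ℝ → ℝ) (hu : ∀ θ, HasDerivAt u (u' θ) θ) (hc : Continuous u')
    (h0 : u 0 = 0) (hpi : u Real.pi = 0) (z : ℝ) :
    KK u' z = z * KK (fun θ => Real.sin θ * u θ) z := by
  have huc : Continuous u := continuous_iff_continuousAt.2 fun θ => (hu θ).continuousAt
  have key : KK (fun θ => 1 * u' θ + (-z) * (Real.sin θ * u θ)) z = 0 := by
    unfold KK
    rw [intervalIntegral.integral_eq_sub_of_hasDerivAt
      (f := fun θ => Real.exp (z * Real.cos θ) * u θ)]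
    · simp [h0, hpi]
    · intro θ _
      have h := (((Real.hasDerivAt_cos θ).const_mul z).exp).mul (hu θ)
      refine HasDerivAt.congr_deriv h ?_
      ring
    · apply KK_intble
      fun_prop
  rw [KK_lin u' (fun θ => Real.sin θ * u θ) hc (by fun_prop)] at key
  linarith

theorem KK_deriv (w : ℝ → ℝ) (hw : Continuous w) (z : ℝ) :
    HasDerivAt (KK w) (KK (fun θ => Real.cos θ * w θ) z) z := by
  unfold KK
  refine (intervalIntegral.hasDerivAt_integral_of_dominated_loc_of_deriv_le
    (F := fun z θ => Real.exp (z * Real.cos θ) * w θ)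
    (F' := fun z θ => Real.exp (z * Real.cos θ) * (Real.cos θ * w θ))
    (bound := fun θ => Real.exp (|z| + 1) * |w θ|)
    (Metric.ball_mem_nhds z one_pos) ?_ ?_ ?_ ?_ ?_ ?_).2
  · refine Filter.Eventually.of_forall fun x => ?_
    exact Continuous.aestronglyMeasurable (by fun_prop)
  · exact KK_intble w hw z
  · exact Continuous.aestronglyMeasurable (by fun_prop)
  · refine Filter.Eventually.of_forall fun θ _ x hx => ?_
    rw [Real.norm_eq_abs, abs_mul, abs_mul, Real.abs_exp]
    have hc := Real.abs_cos_le_one θ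
    have hx' : |x| ≤ |z| + 1 := by
      rw [Metric.mem_ball, Real.dist_eq] at hx
      have := abs_sub_abs_le_abs_sub x z
      linarith
    have h1 : Real.exp (x * Real.cos θ) ≤ Real.exp (|z| + 1) := by
      apply Real.exp_le_exp.2
      calc x * Real.cos θ ≤ |x * Real.cos θ| := le_abs_self _
        _ = |x| * |Real.cos θ| := abs_mul _ _
        _ ≤ |x| * 1 := by gcongr
        _ ≤ |z| + 1 := by linarith
    have h2 : |Real.cos θ| * |w θ| ≤ |w θ| := by
      nlinarith [abs_nonneg (w θ)]
    exact mul_le_mul h1 h2 (by positivity) (by positivity)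
  · apply Continuous.intervalIntegrable
    fun_prop
  · refine Filter.Eventually.of_forall fun θ _ x _ => ?_
    have h := (((hasDerivAt_id x).mul_const (Real.cos θ)).exp).mul_const (w θ)
    refine HasDerivAt.congr_deriv h ?_
    try simp only [id]
    ring

theorem KK_pos (w : ℝ → ℝ) (hw : Continuous w) (hp : ∀ θ ∈ Set.Ioo 0 Real.pi, 0 < w θ) (z : ℝ) :
    0 < KK w z := by
  apply intervalIntegral.intervalIntegral_pos_of_pos_on (KK_intble w hw z) _ Real.pi_pos
  intro θ hθ
  exact mul_pos (Real.exp_pos _) (hp θ hθ)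

theorem subst_cos (g : ℝ → ℝ) :
    ∫ t in (-1 : ℝ)..1, g t = ∫ θ in Set.Ioo 0 Real.pi, Real.sin θ * g (Real.cos θ) := by
  have him : Real.cos '' Set.Ioo 0 Real.pi = Set.Ioo (-1) 1 :=
    Real.cosPartialHomeomorph.image_source_eq_target
  rw [intervalIntegral.integral_of_le (by norm_num), MeasureTheory.integral_Ioc_eq_integral_Ioo,
    ← him, MeasureTheory.integral_image_eq_integral_abs_deriv_smul (f' := fun θ => -Real.sin θ)
      measurableSet_Ioo (fun x _ => (Real.hasDerivAt_cos x).hasDerivWithinAt)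
      (Real.injOn_cos.mono Set.Ioo_subset_Icc_self)]
  apply MeasureTheory.setIntegral_congr_fun measurableSet_Ioo
  intro θ hθ
  simp only [abs_neg, smul_eq_mul]
  rw [abs_of_pos (Real.sin_pos_of_mem_Ioo hθ)]

theorem B0_eq (z : ℝ) : B0 z = KK (fun _ => 1) z := by
  unfold B0 KK
  rw [subst_cos, intervalIntegral.integral_of_le Real.pi_pos.le,
    MeasureTheory.integral_Ioc_eq_integral_Ioo]
  apply MeasureTheory.setIntegral_congr_fun measurableSet_Ioo
  intro θ hθ
  have hs := Real.sin_pos_of_mem_Ioo hθ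
  have h1 : 1 - Real.cos θ ^ 2 = Real.sin θ ^ 2 := by
    linarith [Real.sin_sq_add_cos_sq θ]
  simp only []
  rw [h1, Real.rpow_neg (by positivity), ← Real.sqrt_eq_rpow, Real.sqrt_sq hs.le]
  field_simp

theorem B1_eq (z : ℝ) : B1 z = KK (fun θ => Real.sin θ ^ 2) z := by
  unfold B1 KK
  rw [subst_cos, intervalIntegral.integral_of_le Real.pi_pos.le,
    MeasureTheory.integral_Ioc_eq_integral_Ioo]
  apply MeasureTheory.setIntegral_congr_fun measurableSet_Ioo
  intro θ hθ
  have hs := Real.sin_pos_of_mem_Ioo hθ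
  have h1 : 1 - Real.cos θ ^ 2 = Real.sin θ ^ 2 := by
    linarith [Real.sin_sq_add_cos_sq θ]
  simp only []
  rw [h1, Real.sqrt_sq hs.le]
  ring

theorem rel1 (z : ℝ) :
    KK (fun θ => Real.cos θ * 1) z = z * KK (fun θ => Real.sin θ ^ 2) z := by
  have h := KK_ibp Real.sin (fun θ => Real.cos θ * 1)
    (fun θ => by simpa using Real.hasDerivAt_sin θ) (by fun_prop) (by simp) (by simp) z
  rw [h]
  congr 2
  ext θ
  ring

theorem rel2 (z : ℝ) :
    KK (fun _ => 1) z - 2 * KK (fun θ => Real.sin θ ^ 2) z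
      = z * KK (fun θ => Real.cos θ * Real.sin θ ^ 2) z := by
  have h := KK_ibp (fun θ => Real.sin θ * Real.cos θ)
    (fun θ => 1 * 1 + (-2) * Real.sin θ ^ 2)
    (fun θ => by
      have := (Real.hasDerivAt_sin θ).mul (Real.hasDerivAt_cos θ)
      refine HasDerivAt.congr_deriv this ?_
      linear_combination Real.sin_sq_add_cos_sq θ)
    (by fun_prop) (by simp) (by simp) z
  rw [KK_lin (fun _ => 1) (fun θ => Real.sin θ ^ 2) (by fun_prop) (by fun_prop)] at h
  have e : (fun θ => Real.sin θ * (Real.sin θ * Real.cos θ))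
      = fun θ => Real.cos θ * Real.sin θ ^ 2 := by
    ext θ; ring
  rw [e] at h
  linarith

theorem rel3 (z : ℝ) :
    3 * KK (fun θ => Real.cos θ * Real.sin θ ^ 2) z = z * KK (fun θ => Real.sin θ ^ 4) z := by
  have h := KK_ibp (fun θ => Real.sin θ ^ 3)
    (fun θ => 3 * (Real.cos θ * Real.sin θ ^ 2) + 0 * Real.sin θ)
    (fun θ => by
      have := (Real.hasDerivAt_sin θ).pow 3
      refine HasDerivAt.congr_deriv this ?_
      push_cast
      ring)
    (by fun_prop) (by simp) (by simp) z
  rw [KK_lin (fun θ => Real.cos θ * Real.sin θ ^ 2) Real.sin (by fun_prop) (by fun_prop)] at h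
  have e : (fun θ => Real.sin θ * Real.sin θ ^ 3) = fun θ => Real.sin θ ^ 4 := by
    ext θ; ring
  rw [e] at h
  linarith

theorem rel4 (z : ℝ) :
    3 * KK (fun θ => Real.sin θ ^ 2) z - 4 * KK (fun θ => Real.sin θ ^ 4) z
      = z * KK (fun θ => Real.cos θ * Real.sin θ ^ 4) z := by
  have h := KK_ibp (fun θ => Real.sin θ ^ 3 * Real.cos θ)
    (fun θ => 3 * Real.sin θ ^ 2 + (-4) * Real.sin θ ^ 4)
    (fun θ => by
      have := ((Real.hasDerivAt_sin θ).pow 3).mul (Real.hasDerivAt_cos θ)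
      refine HasDerivAt.congr_deriv this ?_
      have h1 : Real.cos θ ^ 2 = 1 - Real.sin θ ^ 2 := by
        linarith [Real.sin_sq_add_cos_sq θ]
      push_cast
      try simp only [Pi.pow_apply]
      linear_combination (3 * Real.sin θ ^ 2) * h1)
    (by fun_prop) (by simp) (by simp) z
  rw [KK_lin (fun θ => Real.sin θ ^ 2) (fun θ => Real.sin θ ^ 4) (by fun_prop) (by fun_prop)] at h
  have e : (fun θ => Real.sin θ * (Real.sin θ ^ 3 * Real.cos θ))
      = fun θ => Real.cos θ * Real.sin θ ^ 4 := by
    ext θ; ring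
  rw [e] at h
  linarith

theorem rel5 (z : ℝ) :
    5 * KK (fun θ => Real.cos θ * Real.sin θ ^ 4) z = z * KK (fun θ => Real.sin θ ^ 6) z := by
  have h := KK_ibp (fun θ => Real.sin θ ^ 5)
    (fun θ => 5 * (Real.cos θ * Real.sin θ ^ 4) + 0 * Real.sin θ)
    (fun θ => by
      have := (Real.hasDerivAt_sin θ).pow 5
      refine HasDerivAt.congr_deriv this ?_
      push_cast
      ring)
    (by fun_prop) (by simp) (by simp) z
  rw [KK_lin (fun θ => Real.cos θ * Real.sin θ ^ 4) Real.sin (by fun_prop) (by fun_prop)] at h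
  have e : (fun θ => Real.sin θ * Real.sin θ ^ 5) = fun θ => Real.sin θ ^ 6 := by
    ext θ; ring
  rw [e] at h
  linarith

/-- The difference of the two sides. -/
noncomputable def FF (z : ℝ) : ℝ :=
  KK (fun _ => 1) z ^ 2 - (z ^ 2 + 4) * KK (fun θ => Real.sin θ ^ 2) z ^ 2

theorem FF_deriv (z : ℝ) :
    HasDerivAt FF (2 * KK (fun θ => Real.sin θ ^ 2) z *
      (z ^ 3 * KK (fun θ => Real.sin θ ^ 6) z / 15)) z := by
  have hA := KK_deriv (fun _ => 1) (by fun_prop) z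
  have hB := KK_deriv (fun θ => Real.sin θ ^ 2) (by fun_prop) z
  have h := (hA.pow 2).sub ((((hasDerivAt_id z).pow 2).add_const 4).mul (hB.pow 2))
  refine HasDerivAt.congr_deriv h ?_
  have r1 := rel1 z
  have r2 := rel2 z
  have r3 := rel3 z
  have r4 := rel4 z
  have r5 := rel5 z
  try simp only [Pi.pow_apply, id]
  push_cast
  rw [r1]
  generalize KK (fun _ => 1) z = A at *
  generalize KK (fun θ => Real.sin θ ^ 2) z = B at *
  generalize KK (fun θ => Real.cos θ * Real.sin θ ^ 2) z = D at *
  generalize KK (fun θ => Real.sin θ ^ 4) z = P at *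
  generalize KK (fun θ => Real.cos θ * Real.sin θ ^ 4) z = Q at *
  generalize KK (fun θ => Real.sin θ ^ 6) z = R at *
  have hR : z ^ 3 * R = 15 * (z * B - 4 * D) := by
    linear_combination (-z ^ 2) * r5 - 5 * z * r4 + 20 * r3
  rw [hR]
  linear_combination (2 * B * z) * r2

theorem FF_zero : FF 0 = 0 := by
  unfold FF KK
  simp [integral_sin_sq]
  ring

/-- The Bessel inequality `(I₀(z)/I₁(z))² > 1 + 4/z²` for all `z > 0`, in
integral form: `B₀(z)² > (z² + 4)·B₁(z)²`. -/
theorem bessel_ineq (z : ℝ) (hz : 0 < z) :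
    (z ^ 2 + 4) * (B1 z) ^ 2 < (B0 z) ^ 2 := by
  have hmono : StrictMonoOn FF (Set.Ici 0) := by
    apply strictMonoOn_of_deriv_pos (convex_Ici 0)
    · exact fun x _ => (FF_deriv x).continuousAt.continuousWithinAt
    · intro x hx
      rw [interior_Ici, Set.mem_Ioi] at hx
      rw [(FF_deriv x).deriv]
      have h2 := KK_pos (fun θ => Real.sin θ ^ 2) (by fun_prop)
        (fun θ hθ => pow_pos (Real.sin_pos_of_mem_Ioo hθ) 2) x
      have h6 := KK_pos (fun θ => Real.sin θ ^ 6) (by fun_prop)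
        (fun θ hθ => pow_pos (Real.sin_pos_of_mem_Ioo hθ) 6) x
      positivity
  have h := hmono (Set.mem_Ici.2 le_rfl) (Set.mem_Ici.2 hz.le) hz
  rw [FF_zero] at h
  unfold FF at h
  rw [B0_eq, B1_eq]
  linarith
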